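/- Let F be a free group with a fixed basis, and let g₁, g₂ ∈ F be commuting nontrivial elements with cyclic decompositions g₁ = c⁻¹·h₁·c and g₂ = d⁻¹·h₂·d (all products reduced without cancellation, h₁ and h₂ cyclically reduced and nontrivial). Then c = d. -/

import Mathlib

/-!
Two commuting nontrivial elements of a free group generate an abelian subgroup, which is free by
the Nielsen–Schreier theorem and hence has rank at most one; so they have a common nontrivial power
`g₁ ^ a = g₂ ^ b` (`exists_zpow_eq_zpow_of_commute`).

If `g = c⁻¹ h c` is a cyclic decomposition, then for every `n ≥ 1` the word `c⁻¹ hⁿ c` is still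
reduced, because `h` is cyclically reduced. Hence the reduced word of `g ^ n`, for `n ≠ 0`, ends
with `c` and has length `2|c| + |n||h|` (`toWord_zpow_of_decomposition`). Comparing the
lengths of `g₁ ^ a = g₂ ^ b` and of `g₁ ^ (2a) = g₂ ^ (2b)` gives `|c| = |d|`, and `c` and `d` are
then suffixes of the same length of the same word.
-/

/-- An element of a free group is cyclically reduced if the first letter of its
reduced word is not the inverse of its last letter. -/
def CyclicallyReduced {X : Type*} [DecidableEq X] (w : FreeGroup X) : Prop :=
  ∀ a ∈ w.toWord.head?, ∀ b ∈ w.toWord.getLast?, a ≠ (b.1, !b.2)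

/-- An abelian free group has at most one free generator, so it is cyclic. -/
theorem FreeGroupBasis.exists_zpowers_of_comm {ι G : Type*} [Group G] (b : FreeGroupBasis ι G)
    (hG : ∀ x y : G, x * y = y * x) : ∃ r : G, ∀ x : G, ∃ n : ℤ, r ^ n = x := by
  classical
  have hsub : Subsingleton ι := by
    refine ⟨fun i j => ?_⟩
    have h := congrArg FreeGroup.toWord (congrArg b.repr (hG (b i) (b j)))
    by_contra hij
    simp [FreeGroup.toWord_mul, FreeGroup.reduce.cons, hij] at h
  rcases isEmpty_or_nonempty ι with hι | ⟨⟨i⟩⟩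
  · exact ⟨1, fun x => ⟨0, b.repr.injective (Subsingleton.elim _ _)⟩⟩
  · have : Unique ι := ⟨⟨i⟩, fun j => Subsingleton.elim _ _⟩
    obtain ⟨r, hr⟩ := IsCyclic.exists_generator (α := FreeGroup ι)
    refine ⟨b.repr.symm r, fun x => ?_⟩
    obtain ⟨n, hn⟩ := hr (b.repr x)
    refine ⟨n, ?_⟩
    rw [← map_zpow, MulEquiv.symm_apply_eq]
    exact hn

theorem exists_zpow_eq_zpow_of_commute {X : Type*} {g₁ g₂ : FreeGroup X}
    (hcomm : Commute g₁ g₂) (hg₁ : g₁ ≠ 1) (hg₂ : g₂ ≠ 1) :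
    ∃ a b : ℤ, a ≠ 0 ∧ b ≠ 0 ∧ g₁ ^ a = g₂ ^ b := by
  let H := Subgroup.closure {g₁, g₂}
  have hH : IsMulCommutative H := Subgroup.isMulCommutative_closure (by
    rintro x (rfl | rfl) y (rfl | rfl)
    exacts [rfl, hcomm, hcomm.symm, rfl])
  obtain ⟨ι, ⟨b⟩⟩ := IsFreeGroup.nonempty_basis (G := H)
  obtain ⟨r, hr⟩ := b.exists_zpowers_of_comm fun x y => hH.is_comm.comm x y
  obtain ⟨m, hm⟩ := hr ⟨g₁, Subgroup.subset_closure (by simp)⟩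
  obtain ⟨n, hn⟩ := hr ⟨g₂, Subgroup.subset_closure (by simp)⟩
  have hm : (r : FreeGroup X) ^ m = g₁ := by simpa using congrArg Subtype.val hm
  have hn : (r : FreeGroup X) ^ n = g₂ := by simpa using congrArg Subtype.val hn
  refine ⟨n, m, ?_, ?_, ?_⟩
  · rintro rfl
    exact hg₂ (by simpa using hn.symm)
  · rintro rfl
    exact hg₁ (by simpa using hm.symm)
  · rw [← hm, ← hn, ← zpow_mul, ← zpow_mul, mul_comm]

theorem CyclicallyReduced.isCyclicallyReduced {X : Type*} [DecidableEq X] {h : FreeGroup X}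
    (hh : CyclicallyReduced h) : FreeGroup.IsCyclicallyReduced h.toWord := by
  refine ⟨FreeGroup.isReduced_toWord, fun a ha b hb hab => ?_⟩
  by_contra hne
  refine hh b hb a ha (Prod.ext hab.symm ?_)
  revert hne
  cases a.2 <;> cases b.2 <;> simp

theorem toWord_pow_of_decomposition {X : Type*} [DecidableEq X] {c h : FreeGroup X}
    (nc : (c⁻¹ * h * c).toWord = c⁻¹.toWord ++ h.toWord ++ c.toWord)
    (cr : CyclicallyReduced h) {n : ℕ} (hn : n ≠ 0) :
    ((c⁻¹ * h * c) ^ n).toWord =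
      c⁻¹.toWord ++ (List.replicate n h.toWord).flatten ++ c.toWord := by
  have hred : FreeGroup.IsReduced (c⁻¹.toWord ++ h.toWord ++ c.toWord) :=
    nc ▸ FreeGroup.isReduced_toWord
  rw [← (FreeGroup.IsReduced.append_flatten_replicate_append
    cr.isCyclicallyReduced hred hn).reduce_eq, ← FreeGroup.toWord_mk]
  congr 1
  have hconj := conj_pow (i := n) (a := c⁻¹) (b := h)
  rw [inv_inv] at hconj
  rw [hconj, ← FreeGroup.mul_mk, ← FreeGroup.mul_mk, ← FreeGroup.pow_mk]
  simp only [FreeGroup.mk_toWord]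

/-- Negative powers are covered because inverting the word `c⁻¹ hⁿ c` gives `c⁻¹ h⁻ⁿ c`, with the
same final segment `c`. -/
theorem toWord_zpow_of_decomposition {X : Type*} [DecidableEq X] {c h : FreeGroup X}
    (nc : (c⁻¹ * h * c).toWord = c⁻¹.toWord ++ h.toWord ++ c.toWord)
    (cr : CyclicallyReduced h) {n : ℤ} (hn : n ≠ 0) :
    c.toWord <:+ ((c⁻¹ * h * c) ^ n).toWord ∧
      ((c⁻¹ * h * c) ^ n).toWord.length =
        2 * c.toWord.length + n.natAbs * h.toWord.length := by
  have key := toWord_pow_of_decomposition nc cr (Int.natAbs_ne_zero.mpr hn)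
  rcases Int.natAbs_eq n with hn' | hn'
  · rw [hn', zpow_natCast, Int.natAbs_natCast, key]
    refine ⟨List.suffix_append _ _, ?_⟩
    simp [FreeGroup.toWord_inv]
    ring
  · rw [hn', zpow_neg, zpow_natCast, Int.natAbs_neg, Int.natAbs_natCast, FreeGroup.toWord_inv, key]
    simp only [FreeGroup.toWord_inv, FreeGroup.invRev_append, FreeGroup.invRev_invRev]
    refine ⟨⟨_, List.append_assoc _ _ _⟩, ?_⟩
    simp
    ring

/-- commuting nontrivial elements of a free group with cyclic
decompositions `g₁ = c⁻¹ h₁ c` and `g₂ = d⁻¹ h₂ d` (products without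
cancellation, `h₁, h₂` cyclically reduced and nontrivial) satisfy `c = d`. -/
theorem cyclic_decompositions_of_commuting {X : Type*} [DecidableEq X]
    (g₁ g₂ c d h₁ h₂ : FreeGroup X)
    (hcomm : Commute g₁ g₂) (hg₁ : g₁ ≠ 1) (hg₂ : g₂ ≠ 1)
    (e₁ : g₁ = c⁻¹ * h₁ * c)
    (nc₁ : (c⁻¹ * h₁ * c).toWord = c⁻¹.toWord ++ h₁.toWord ++ c.toWord)
    (cr₁ : CyclicallyReduced h₁) (h₁ne : h₁ ≠ 1)
    (e₂ : g₂ = d⁻¹ * h₂ * d)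
    (nc₂ : (d⁻¹ * h₂ * d).toWord = d⁻¹.toWord ++ h₂.toWord ++ d.toWord)
    (cr₂ : CyclicallyReduced h₂) (h₂ne : h₂ ≠ 1) :
    c = d := by
  obtain ⟨a, b, ha, hb, hab⟩ := exists_zpow_eq_zpow_of_commute hcomm hg₁ hg₂
  have hab2 : g₁ ^ (a * 2) = g₂ ^ (b * 2) := by rw [zpow_mul, zpow_mul, hab]
  rw [e₁, e₂] at hab hab2
  obtain ⟨s₁, l₁⟩ := toWord_zpow_of_decomposition nc₁ cr₁ ha
  obtain ⟨s₂, l₂⟩ := toWord_zpow_of_decomposition nc₂ cr₂ hb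
  obtain ⟨-, k₁⟩ := toWord_zpow_of_decomposition nc₁ cr₁ (mul_ne_zero ha two_ne_zero)
  obtain ⟨-, k₂⟩ := toWord_zpow_of_decomposition nc₂ cr₂ (mul_ne_zero hb two_ne_zero)
  rw [hab] at s₁ l₁
  rw [hab2] at k₁
  simp only [Int.natAbs_mul, Int.reduceAbs] at k₁ k₂
  have hlen : c.toWord.length = d.toWord.length := by
    linarith
  exact FreeGroup.toWord_injective
    ((List.suffix_of_suffix_length_le s₁ s₂ hlen.le).eq_of_length hlen)
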